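/- arXiv:1709.03896 — 2 statements merged into one kernel-verified Lean document; each statement's English description precedes it below -/
import Mathlib

section
/- Let E = EuclideanSpace ℝ (Fin N), let f : E → ℝ, let Δt > 0, let M, C : E →ₗ[ℝ] E be self-adjoint with C positive semidefinite, and let G : E × E → E satisfy ⟪G(x,y), y − x⟫ = f(y) − f(x) for all x, y ∈ E. Suppose u : ℕ → E satisfies, for all n ≥ 1, M((u(n+1) − 2u(n) + u(n−1))/Δt²) + C((u(n+1) − u(n−1))/(2Δt)) + G((u(n)+u(n−1))/2, (u(n+1)+u(n))/2) = 0. Define v(n) := (u(n) − u(n−1))/Δt, m(n) := (u(n) + u(n−1))/2, and Π(n) := (1/2)⟪v(n), M v(n)⟫ + f(m(n)). Then the discrete total energy is non-increasing: Π(n+1) ≤ Π(n) for all n ≥ 1. -/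
open RealInnerProductSpace

/-!
Testing the scheme against the midpoint increment `m(n+1) - m(n) = (u(n+1) - u(n-1)) / 2` gives an
exact energy balance. The inertia term contributes the change of kinetic energy, the cross terms
cancelling by symmetry of `M`; the discrete gradient contributes the change of `f`; and the
increment is `Δt` times the central velocity `w`, so the damping dissipates exactly `Δt ⟪w, C w⟫`.
-/

section DiscreteEnergy

variable {E : Type*} [SeminormedAddCommGroup E] [InnerProductSpace ℝ E]

/-- `G` is a discrete gradient of `f`: the exact increment identity that replaces the chain rule
in the discrete energy balance. -/
def IsDiscreteGradient (G : E → E → E) (f : E → ℝ) : Prop :=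
  ∀ x y, ⟪G x y, y - x⟫ = f y - f x

/-- The discrete total energy `Π` carried by two consecutive states `x`, `y`: kinetic energy of the
difference quotient plus potential energy at the midpoint. -/
noncomputable def discreteEnergy (M : E →ₗ[ℝ] E) (f : E → ℝ) (Δt : ℝ) (x y : E) : ℝ :=
  (1/2 : ℝ) * ⟪Δt⁻¹ • (y - x), M (Δt⁻¹ • (y - x))⟫ + f ((2 : ℝ)⁻¹ • (y + x))

/-- Three consecutive states `x`, `y`, `z` satisfy the two-step scheme with mass `M`, damping `C`
and discrete internal force `G`; velocity and acceleration are central differences at `y`. -/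
def IsTwoStep (M : E →ₗ[ℝ] E) (C : E → E) (G : E → E → E) (Δt : ℝ) (x y z : E) : Prop :=
  M ((Δt ^ 2)⁻¹ • (z - (2 : ℝ) • y + x)) + C ((2 * Δt)⁻¹ • (z - x)) +
    G ((2 : ℝ)⁻¹ • (y + x)) ((2 : ℝ)⁻¹ • (z + y)) = 0

variable {M : E →ₗ[ℝ] E} {C : E → E} {G : E → E → E} {f : E → ℝ} {Δt : ℝ}

lemma inner_map_sub_add_of_isSymmetric (hM : M.IsSymmetric) (a b : E) :
    ⟪M (a - b), a + b⟫ = ⟪a, M a⟫ - ⟪b, M b⟫ := by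
  have cross : ⟪b, M a⟫ = ⟪a, M b⟫ := by rw [← hM b a, real_inner_comm]
  rw [hM, map_add, inner_sub_left, inner_add_right, inner_add_right, cross]
  ring

lemma inner_inertia_midpoint_increment (hM : M.IsSymmetric) (x y z : E) :
    ⟪M ((Δt ^ 2)⁻¹ • (z - (2 : ℝ) • y + x)), (2 : ℝ)⁻¹ • (z - x)⟫ =
      (1/2 : ℝ) * ⟪Δt⁻¹ • (z - y), M (Δt⁻¹ • (z - y))⟫ -
        (1/2 : ℝ) * ⟪Δt⁻¹ • (y - x), M (Δt⁻¹ • (y - x))⟫ := by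
  have second_difference : z - (2 : ℝ) • y + x = (z - y) - (y - x) := by module
  have increment : z - x = (z - y) + (y - x) := by module
  rw [second_difference, increment]
  simp only [map_smul, real_inner_smul_left, real_inner_smul_right,
    inner_map_sub_add_of_isSymmetric hM]
  ring

lemma inner_damping_midpoint_increment (C : E → E) (hΔt : Δt ≠ 0) (x z : E) :
    ⟪C ((2 * Δt)⁻¹ • (z - x)), (2 : ℝ)⁻¹ • (z - x)⟫ =
      Δt * ⟪(2 * Δt)⁻¹ • (z - x), C ((2 * Δt)⁻¹ • (z - x))⟫ := by
  have increment : (2 : ℝ)⁻¹ • (z - x) = Δt • (2 * Δt)⁻¹ • (z - x) := by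
    rw [smul_smul]
    congr 1
    field_simp
  rw [increment, real_inner_smul_right, real_inner_comm]

lemma IsDiscreteGradient.inner_midpoint_increment (hG : IsDiscreteGradient G f) (x y z : E) :
    ⟪G ((2 : ℝ)⁻¹ • (y + x)) ((2 : ℝ)⁻¹ • (z + y)), (2 : ℝ)⁻¹ • (z - x)⟫ =
      f ((2 : ℝ)⁻¹ • (z + y)) - f ((2 : ℝ)⁻¹ • (y + x)) := by
  rw [← hG]
  congr 1
  module

theorem IsTwoStep.discreteEnergy_sub_eq {x y z : E} (h : IsTwoStep M C G Δt x y z)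
    (hM : M.IsSymmetric) (hG : IsDiscreteGradient G f) (hΔt : Δt ≠ 0) :
    discreteEnergy M f Δt y z - discreteEnergy M f Δt x y =
      -(Δt * ⟪(2 * Δt)⁻¹ • (z - x), C ((2 * Δt)⁻¹ • (z - x))⟫) := by
  have balance := congrArg (fun r ↦ ⟪r, (2 : ℝ)⁻¹ • (z - x)⟫) h
  simp only [inner_add_left, inner_zero_left, inner_inertia_midpoint_increment hM,
    inner_damping_midpoint_increment C hΔt, hG.inner_midpoint_increment] at balance
  unfold discreteEnergy
  linarith

theorem discrete_energy_nonincreasing_general (hΔt : 0 < Δt) (hM : M.IsSymmetric)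
    (hC : ∀ v, 0 ≤ ⟪v, C v⟫) (hG : IsDiscreteGradient G f) {u : ℕ → E}
    (hu : ∀ n, IsTwoStep M C G Δt (u n) (u (n + 1)) (u (n + 2))) :
    Antitone fun n ↦ discreteEnergy M f Δt (u n) (u (n + 1)) := by
  refine antitone_nat_of_succ_le fun n ↦ sub_nonpos.mp ?_
  rw [(hu n).discreteEnergy_sub_eq hM hG hΔt.ne']
  exact neg_nonpos.mpr (mul_nonneg hΔt.le (hC _))

end DiscreteEnergy

/-- Unconditional stability of the two-step scheme driven by a discrete gradient `G`
with positive semidefinite damping: the discrete total energy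
`Π(n) = (1/2)⟪v(n), M v(n)⟫ + f(m(n))` is non-increasing, where
`v(n) = (u(n) − u(n−1))/Δt` and `m(n) = (u(n) + u(n−1))/2`. -/
theorem discrete_energy_nonincreasing (N : ℕ)
    (f : EuclideanSpace ℝ (Fin N) → ℝ) (Δt : ℝ) (hΔt : 0 < Δt)
    (M C : EuclideanSpace ℝ (Fin N) →ₗ[ℝ] EuclideanSpace ℝ (Fin N))
    (hM_sa : ∀ x y : EuclideanSpace ℝ (Fin N), ⟪M x, y⟫ = ⟪x, M y⟫)
    (hC_sa : ∀ x y : EuclideanSpace ℝ (Fin N), ⟪C x, y⟫ = ⟪x, C y⟫)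
    (hC_psd : ∀ v : EuclideanSpace ℝ (Fin N), 0 ≤ ⟪v, C v⟫)
    (G : EuclideanSpace ℝ (Fin N) → EuclideanSpace ℝ (Fin N) → EuclideanSpace ℝ (Fin N))
    (hG : ∀ x y : EuclideanSpace ℝ (Fin N), ⟪G x y, y - x⟫ = f y - f x)
    (u : ℕ → EuclideanSpace ℝ (Fin N))
    (hu : ∀ n, 1 ≤ n →
      M ((Δt ^ 2)⁻¹ • (u (n + 1) - (2 : ℝ) • u n + u (n - 1))) +
        C ((2 * Δt)⁻¹ • (u (n + 1) - u (n - 1))) +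
        G ((2 : ℝ)⁻¹ • (u n + u (n - 1))) ((2 : ℝ)⁻¹ • (u (n + 1) + u n)) = 0) :
    ∀ n, 1 ≤ n →
      (1/2 : ℝ) * ⟪Δt⁻¹ • (u (n + 1) - u n), M (Δt⁻¹ • (u (n + 1) - u n))⟫ +
          f ((2 : ℝ)⁻¹ • (u (n + 1) + u n)) ≤
        (1/2 : ℝ) * ⟪Δt⁻¹ • (u n - u (n - 1)), M (Δt⁻¹ • (u n - u (n - 1)))⟫ +
          f ((2 : ℝ)⁻¹ • (u n + u (n - 1))) := by
  rintro (_ | n) hn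
  · contradiction
  · exact discrete_energy_nonincreasing_general hΔt hM_sa hC_psd hG
      (fun k ↦ hu (k + 1) k.succ_pos) n.le_succ
end

section
/- Let E = EuclideanSpace ℝ (Fin N), let d ∈ ℕ, and let f : E → ℝ be C^∞ with iteratedFDeriv ℝ κ f x = 0 for all κ > d and all x ∈ E. Define the Taylor-series flux g : E × E → E by ⟪g(x,Δ), e⟫ = Σ_{κ=1}^{d} (1/κ!) (iteratedFDeriv ℝ κ f x) applied to (κ−1) copies of Δ followed by e. Then for every x ∈ E and every R > 0 there exists a constant C₀ ≥ 0 such that for all Δ ∈ E with ‖Δ‖ ≤ R, ‖g(x,Δ) − ∇f(x + Δ/2)‖ ≤ C₀ ‖Δ‖². -/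
open RealInnerProductSpace

/-!
As a covector, the flux is `∑ₖ DᵏF(x)(Δ, …, Δ) / (k+1)!` with `F = Df`, which is the Taylor series
in `Δ` of the mean `∫₀¹ F(x + tΔ) dt` of `F` over the segment from `x` to `x + Δ`. The mean over a
segment and the value at its midpoint have the same first-order expansion `F(x) + ½ DF(x) Δ`, so
they differ by the quadratic Taylor remainder of `F` and by the terms `k ≥ 2` of the series.
-/

section SegmentMean

open Finset Nat

variable {E G : Type*} [NormedAddCommGroup E] [NormedSpace ℝ E]
  [NormedAddCommGroup G] [NormedSpace ℝ G]

theorem norm_sub_sum_iteratedFDeriv_le [CompleteSpace G] {F : E → G} {n : ℕ} {x h : E} {K : ℝ}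
    (hF : ∀ t ∈ Set.Icc (0 : ℝ) 1, ContDiffAt ℝ (n + 1) F (x + t • h))
    (hK : ∀ t ∈ Set.Icc (0 : ℝ) 1, ‖iteratedFDeriv ℝ (n + 1) F (x + t • h)‖ ≤ K) :
    ‖F (x + h) - ∑ k ∈ range (n + 1), (k ! : ℝ)⁻¹ • iteratedFDeriv ℝ k F x (fun _ => h)‖
      ≤ K * ‖h‖ ^ (n + 1) / (n + 1)! := by
  have integrand_le : ∀ t ∈ Set.Icc (0 : ℝ) 1,
      ‖(1 - t) ^ n • iteratedFDeriv ℝ (n + 1) F (x + t • h) (fun _ => h)‖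
        ≤ (1 - t) ^ n * (K * ‖h‖ ^ (n + 1)) := by
    intro t ht
    have weight_nonneg : 0 ≤ (1 - t) ^ n := pow_nonneg (sub_nonneg.2 ht.2) n
    rw [norm_smul, Real.norm_of_nonneg weight_nonneg]
    gcongr
    simpa using (iteratedFDeriv ℝ (n + 1) F (x + t • h)).le_of_opNorm_le (hK t ht) (fun _ => h)
  have integral_weight : ∫ t in (0 : ℝ)..1, (1 - t) ^ n = ((n : ℝ) + 1)⁻¹ := by
    simp [intervalIntegral.integral_comp_sub_left (fun s : ℝ => s ^ n)]
  rw [map_add_eq_sum_add_integral_iteratedFDeriv hF, add_sub_cancel_left, norm_smul,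
    Real.norm_of_nonneg (by positivity)]
  calc (n ! : ℝ)⁻¹ * ‖∫ t in (0 : ℝ)..1,
          (1 - t) ^ n • iteratedFDeriv ℝ (n + 1) F (x + t • h) (fun _ => h)‖
      ≤ (n ! : ℝ)⁻¹ * ∫ t in (0 : ℝ)..1, (1 - t) ^ n * (K * ‖h‖ ^ (n + 1)) := by
        gcongr
        exact intervalIntegral.norm_integral_le_of_norm_le zero_le_one
          (.of_forall fun t ht => integrand_le t (Set.Ioc_subset_Icc_self ht))
          (Continuous.intervalIntegrable (by fun_prop) 0 1)
    _ = K * ‖h‖ ^ (n + 1) / (n + 1)! := by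
        rw [intervalIntegral.integral_mul_const, integral_weight, factorial_succ]
        push_cast
        field_simp

/-- The first `d` terms of the Taylor series in `Δ` of the mean `∫₀¹ F(x + tΔ) dt` of `F` over the
segment from `x` to `x + Δ`. For `F = fderiv ℝ f` it is the Taylor-series flux of `f`, viewed as a
covector. -/
noncomputable def segmentMeanSeries (F : E → G) (d : ℕ) (x Δ : E) : G :=
  ∑ k ∈ range d, ((k + 1)! : ℝ)⁻¹ • iteratedFDeriv ℝ k F x (fun _ => Δ)

theorem segmentMeanSeries_fderiv_apply (f : E → G) (d : ℕ) (x Δ e : E) :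
    segmentMeanSeries (fderiv ℝ f) d x Δ e = ∑ κ ∈ Icc 1 d, (κ ! : ℝ)⁻¹ •
      iteratedFDeriv ℝ κ f x (fun i : Fin κ => if (i : ℕ) + 1 = κ then e else Δ) := by
  rw [← Ico_add_one_right_eq_Icc, ← sum_Ico_add' _ 0 d 1, ← range_eq_Ico, segmentMeanSeries,
    _root_.sum_apply]
  refine sum_congr rfl fun k _ => ?_
  have init_eq : Fin.init (fun i : Fin (k + 1) => if (i : ℕ) + 1 = k + 1 then e else Δ)
      = fun _ => Δ := by
    ext1 i
    simp [Fin.init, i.2.ne]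
  rw [iteratedFDeriv_succ_apply_right, init_eq]
  simp

theorem segmentMeanSeries_eq_add_sum_Ico {F : E → G} {d : ℕ} {x : E}
    (hlow : ∀ k, d ≤ k → k < 2 → iteratedFDeriv ℝ k F x = 0) (Δ : E) :
    segmentMeanSeries F d x Δ = F x + (2 : ℝ)⁻¹ • fderiv ℝ F x Δ +
      ∑ k ∈ Ico 2 d, ((k + 1)! : ℝ)⁻¹ • iteratedFDeriv ℝ k F x (fun _ => Δ) := by
  have first_two : segmentMeanSeries F 2 x Δ = F x + (2 : ℝ)⁻¹ • fderiv ℝ F x Δ := by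
    simp [segmentMeanSeries, sum_range_succ]
  rw [← first_two]
  rcases le_total 2 d with hd | hd
  · exact (sum_range_add_sum_Ico _ hd).symm
  · rw [Ico_eq_empty_of_le hd, sum_empty, add_zero]
    refine sum_subset (range_subset_range.2 hd) fun k hk hkd => ?_
    simp [hlow k (by simpa using hkd) (mem_range.1 hk)]

theorem norm_sum_Ico_iteratedFDeriv_le (F : E → G) (c : ℕ → ℝ) (m d : ℕ) (x : E) {Δ : E} {R : ℝ}
    (hΔ : ‖Δ‖ ≤ R) :
    ‖∑ k ∈ Ico m d, c k • iteratedFDeriv ℝ k F x (fun _ => Δ)‖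
      ≤ (∑ k ∈ Ico m d, |c k| * ‖iteratedFDeriv ℝ k F x‖ * R ^ (k - m)) * ‖Δ‖ ^ m := by
  rw [sum_mul]
  refine norm_sum_le_of_le _ fun k hk => ?_
  calc ‖c k • iteratedFDeriv ℝ k F x (fun _ => Δ)‖
      ≤ |c k| * (‖iteratedFDeriv ℝ k F x‖ * ‖Δ‖ ^ k) := by
        rw [norm_smul, Real.norm_eq_abs]
        gcongr
        simpa using (iteratedFDeriv ℝ k F x).le_opNorm (fun _ => Δ)
    _ = |c k| * ‖iteratedFDeriv ℝ k F x‖ * ‖Δ‖ ^ (k - m) * ‖Δ‖ ^ m := by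
        rw [mul_assoc _ (‖Δ‖ ^ (k - m)), pow_sub_mul_pow _ (mem_Ico.1 hk).1, mul_assoc]
    _ ≤ |c k| * ‖iteratedFDeriv ℝ k F x‖ * R ^ (k - m) * ‖Δ‖ ^ m := by gcongr

theorem norm_map_midpoint_sub_le [CompleteSpace G] {F : E → G} (hF : ContDiff ℝ 2 F) {x Δ : E}
    {R K : ℝ} (hK : ∀ y ∈ Metric.closedBall x (R / 2), ‖iteratedFDeriv ℝ 2 F y‖ ≤ K)
    (hΔ : ‖Δ‖ ≤ R) :
    ‖F (x + (2 : ℝ)⁻¹ • Δ) - (F x + (2 : ℝ)⁻¹ • fderiv ℝ F x Δ)‖ ≤ K / 8 * ‖Δ‖ ^ 2 := by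
  have norm_half : ‖(2 : ℝ)⁻¹ • Δ‖ = ‖Δ‖ / 2 := by
    rw [norm_smul, norm_inv, Real.norm_ofNat, inv_mul_eq_div]
  have segment_mem : ∀ t ∈ Set.Icc (0 : ℝ) 1,
      x + t • (2 : ℝ)⁻¹ • Δ ∈ Metric.closedBall x (R / 2) := by
    intro t ht
    rw [mem_closedBall_iff_norm, add_sub_cancel_left, norm_smul, norm_half,
      Real.norm_of_nonneg ht.1]
    exact (mul_le_of_le_one_left (by positivity) ht.2).trans (by gcongr)
  have taylor := norm_sub_sum_iteratedFDeriv_le (n := 1) (fun t _ => hF.contDiffAt)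
    (fun t ht => hK _ (segment_mem t ht))
  simp only [sum_range_succ, range_zero, sum_empty, zero_add, factorial_zero, factorial_one,
    cast_one, inv_one, one_smul, iteratedFDeriv_zero_apply, iteratedFDeriv_one_apply, map_smul,
    norm_half, reduceAdd, factorial_two] at taylor
  exact taylor.trans_eq (by push_cast; ring)

theorem norm_segmentMeanSeries_sub_map_midpoint_le [CompleteSpace G] {F : E → G}
    (hF : ContDiff ℝ 2 F) {d : ℕ} {x Δ : E} {R K : ℝ}
    (hlow : ∀ k, d ≤ k → k < 2 → iteratedFDeriv ℝ k F x = 0)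
    (hK : ∀ y ∈ Metric.closedBall x (R / 2), ‖iteratedFDeriv ℝ 2 F y‖ ≤ K) (hΔ : ‖Δ‖ ≤ R) :
    ‖segmentMeanSeries F d x Δ - F (x + (2 : ℝ)⁻¹ • Δ)‖
      ≤ (∑ k ∈ Ico 2 d, ((k + 1)! : ℝ)⁻¹ * ‖iteratedFDeriv ℝ k F x‖ * R ^ (k - 2) + K / 8)
        * ‖Δ‖ ^ 2 := by
  rw [segmentMeanSeries_eq_add_sum_Ico hlow, add_mul, add_comm (F x + _), add_sub_assoc]
  refine norm_add_le_of_le ?_ ?_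
  · simpa only [abs_inv, abs_cast] using
      norm_sum_Ico_iteratedFDeriv_le F (fun k => ((k + 1)! : ℝ)⁻¹) 2 d x hΔ
  · rw [norm_sub_rev]
    exact norm_map_midpoint_sub_le hF hK hΔ

end SegmentMean

section Flux

open Finset Nat

variable {E : Type*} [NormedAddCommGroup E] [InnerProductSpace ℝ E] [CompleteSpace E]

theorem norm_sub_gradient (f : E → ℝ) (v y : E) :
    ‖v - gradient f y‖ = ‖InnerProductSpace.toDual ℝ E v - fderiv ℝ f y‖ := by
  rw [← toDual_gradient, ← map_sub, LinearIsometryEquiv.norm_map]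

theorem taylorFlux_second_order_consistency_general {f : E → ℝ} (hf : ContDiff ℝ 3 f) {d : ℕ}
    {x : E} (hlow : ∀ κ, d < κ → κ ≤ 2 → iteratedFDeriv ℝ κ f x = 0) {g : E → E}
    (hg : ∀ Δ e, ⟪g Δ, e⟫ = ∑ κ ∈ Icc 1 d, (κ ! : ℝ)⁻¹ *
      iteratedFDeriv ℝ κ f x (fun i : Fin κ => if (i : ℕ) + 1 = κ then e else Δ))
    {R : ℝ}
    (hbdd : BddAbove ((fun y => ‖iteratedFDeriv ℝ 3 f y‖) '' Metric.closedBall x (R / 2))) :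
    ∃ C₀ : ℝ, 0 ≤ C₀ ∧ ∀ Δ, ‖Δ‖ ≤ R →
      ‖g Δ - gradient f (x + (2 : ℝ)⁻¹ • Δ)‖ ≤ C₀ * ‖Δ‖ ^ 2 := by
  obtain ⟨K, hK⟩ := hbdd
  have toDual_g (Δ : E) :
      InnerProductSpace.toDual ℝ E (g Δ) = segmentMeanSeries (fderiv ℝ f) d x Δ := by
    ext e
    simp only [InnerProductSpace.toDual_apply_apply, hg, segmentMeanSeries_fderiv_apply,
      smul_eq_mul]
  have hlow' : ∀ k, d ≤ k → k < 2 → iteratedFDeriv ℝ k (fderiv ℝ f) x = 0 := by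
    intro k hdk hk
    rw [← norm_eq_zero, norm_iteratedFDeriv_fderiv, hlow (k + 1) (by lia) hk, norm_zero]
  have hK' : ∀ y ∈ Metric.closedBall x (R / 2), ‖iteratedFDeriv ℝ 2 (fderiv ℝ f) y‖ ≤ K := by
    intro y hy
    rw [norm_iteratedFDeriv_fderiv]
    exact hK (Set.mem_image_of_mem _ hy)
  have hf' : ContDiff ℝ 2 (fderiv ℝ f) := hf.fderiv_right (by norm_num)
  obtain ⟨C, hC⟩ : ∃ C : ℝ, ∀ Δ, ‖Δ‖ ≤ R →
      ‖segmentMeanSeries (fderiv ℝ f) d x Δ - fderiv ℝ f (x + (2 : ℝ)⁻¹ • Δ)‖ ≤ C * ‖Δ‖ ^ 2 :=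
    ⟨_, fun _ => norm_segmentMeanSeries_sub_map_midpoint_le hf' hlow' hK'⟩
  refine ⟨|C|, abs_nonneg C, fun Δ hΔ => ?_⟩
  rw [norm_sub_gradient, toDual_g]
  exact (hC Δ hΔ).trans (by gcongr; exact le_abs_self C)

end Flux

/-- Second-order consistency of the Taylor-series flux: for every `x` and radius `R`
there is a constant `C₀ ≥ 0` with `‖g(x,Δ) − ∇f(x + Δ/2)‖ ≤ C₀‖Δ‖²` for `‖Δ‖ ≤ R`. -/
theorem taylorFlux_second_order_consistency (N d : ℕ)
    (f : EuclideanSpace ℝ (Fin N) → ℝ) (hf : ContDiff ℝ (⊤ : ℕ∞) f)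
    (hpoly : ∀ κ : ℕ, d < κ → ∀ x : EuclideanSpace ℝ (Fin N), iteratedFDeriv ℝ κ f x = 0)
    (g : EuclideanSpace ℝ (Fin N) → EuclideanSpace ℝ (Fin N) → EuclideanSpace ℝ (Fin N))
    (hg : ∀ x Δ e : EuclideanSpace ℝ (Fin N), ⟪g x Δ, e⟫ =
      ∑ κ ∈ Finset.Icc 1 d, (κ.factorial : ℝ)⁻¹ *
        (iteratedFDeriv ℝ κ f x) (fun i : Fin κ => if (i : ℕ) + 1 = κ then e else Δ)) :
    ∀ x : EuclideanSpace ℝ (Fin N), ∀ R : ℝ, 0 < R →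
      ∃ C₀ : ℝ, 0 ≤ C₀ ∧
        ∀ Δ : EuclideanSpace ℝ (Fin N), ‖Δ‖ ≤ R →
          ‖g x Δ - gradient f (x + (2 : ℝ)⁻¹ • Δ)‖ ≤ C₀ * ‖Δ‖ ^ 2 := fun x R _ =>
  have hf3 : ContDiff ℝ 3 f := contDiff_infty.1 hf 3
  taylorFlux_second_order_consistency_general hf3 (fun κ hκ _ => hpoly κ hκ x) (hg x)
    ((isCompact_closedBall x (R / 2)).bddAbove_image
      (hf3.continuous_iteratedFDeriv le_rfl).norm.continuousOn)
end
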